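/- Let G be a graph of order n with minimum degree δ(G) ≥ n/2 and n ≥ 3. Then G is Hamiltonian. -/

import Mathlib

/-!
The endpoints `u`, `v` of a longest path `p = x₀ x₁ … xₖ` have all their neighbours on `p`.
Since `deg u + deg v ≥ n > k`, the pigeonhole principle gives an index `i < k` with `u ∼ xᵢ₊₁` and
`v ∼ xᵢ`, and then `xᵢ₊₁ … xₖ xᵢ … x₀ xᵢ₊₁` is a cycle of length `k + 1`
(`DiracAux.exists_cycle_of_crossing`). This cycle is Hamiltonian: it has more than `n / 2` vertices,
so a vertex off it would have a neighbour on it, and opening the cycle at that neighbour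
would give a path of length `k + 1` (`DiracAux.exists_longer_path`).
-/

namespace DiracAux

open SimpleGraph

variable {V : Type*} {G : SimpleGraph V}

/-- A pair of crossing chords at consecutive vertices of a path closes the path up to a cycle on the
same vertices. -/
lemma exists_cycle_of_crossing {u v : V} {p : G.Walk u v} (hp : p.IsPath) (hk : 2 ≤ p.length)
    {i : ℕ} (hi : i < p.length) (hu : G.Adj u (p.getVert (i + 1))) (hv : G.Adj v (p.getVert i)) :
    ∃ c : G.Walk u u, c.IsCycle ∧ c.length = p.length + 1 := by
  let q := (p.drop (i + 1)).append (Walk.cons hv (p.take i).reverse)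
  have hlen : q.length = p.length := by
    simp only [q, Walk.length_append, Walk.length_cons, Walk.length_reverse, Walk.drop_length,
      Walk.take_length]
    omega
  have hq : q.IsPath := by
    have hs : q.support = p.support.drop (i + 1) ++ (p.support.take (i + 1)).reverse := by
      simp only [q, Walk.support_append, Walk.support_cons, Walk.support_reverse, List.tail_cons,
        Walk.support_take, Walk.drop_support_eq_support_drop_min]
      rw [min_eq_left (by omega)]
    rw [Walk.isPath_def, hs]
    have hperm : (p.support.drop (i + 1) ++ (p.support.take (i + 1)).reverse).Perm p.support := by
      refine (List.perm_append_comm.trans ((List.reverse_perm _).append_right _)).trans ?_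
      rw [List.take_append_drop]
    exact hperm.nodup_iff.mpr hp.support_nodup
  refine ⟨Walk.cons hu q, ?_, by simp [hlen]⟩
  rw [Walk.isCycle_iff_isPath_tail_and_le_length]
  exact ⟨by simpa using hq, by simp only [Walk.length_cons]; omega⟩

/-- A vertex off a cycle with a neighbour on it starts a path as long as the cycle. -/
lemma exists_longer_path [DecidableEq V] {a w x : V} {c : G.Walk a a} (hc : c.IsCycle)
    (hx : x ∈ c.support) (hw : w ∉ c.support) (hwx : G.Adj w x) :
    ∃ (y : V) (q : G.Walk w y), q.IsPath ∧ q.length = c.length := by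
  have hr := hc.rotate hx
  refine ⟨_, Walk.cons hwx (c.rotate x hx).tail.reverse, ?_, ?_⟩
  · refine (Walk.cons_isPath_iff _ _).2 ⟨hr.isPath_tail.reverse, fun h ↦ hw ?_⟩
    rw [Walk.support_reverse, List.mem_reverse, Walk.support_tail_of_not_nil _ hr.not_nil] at h
    simpa using List.mem_of_mem_tail h
  · rw [Walk.length_cons, Walk.length_reverse, Walk.length_tail_add_one hr.not_nil,
      Walk.length_rotate]

end DiracAux

open SimpleGraph

theorem stmt9 {V : Type*} [Fintype V] [DecidableEq V] (G : SimpleGraph V)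
    [DecidableRel G.Adj] (hn : 3 ≤ Fintype.card V)
    (hδ : Fintype.card V ≤ 2 * G.minDegree) :
    G.IsHamiltonian := by
  intro _
  have : Nonempty V := Fintype.card_pos_iff.mp (by omega)
  obtain ⟨u, v, p, hp, hmax⟩ := Walk.exists_isPath_forall_isPath_length_le_length G
  -- By maximality, every neighbour of an endpoint lies on `p`.
  have hu : ∀ w, G.Adj u w → w ∈ p.support := by
    intro w hw
    by_contra h
    have := hmax _ _ (Walk.cons hw.symm p) ((Walk.cons_isPath_iff _ _).2 ⟨hp, h⟩)
    simp at this
  have hv : ∀ w, G.Adj v w → w ∈ p.support := by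
    intro w hw
    by_contra h
    have := hmax _ _ (Walk.cons hw.symm p.reverse)
      ((Walk.cons_isPath_iff _ _).2 ⟨hp.reverse, by simpa using h⟩)
    simp at this
  let S := (Finset.range p.length).filter fun i ↦ G.Adj u (p.getVert (i + 1))
  let T := (Finset.range p.length).filter fun i ↦ G.Adj v (p.getVert i)
  have hS : G.minDegree ≤ S.card := by
    refine (G.minDegree_le_degree u).trans ?_
    rw [← G.card_neighborFinset_eq_degree]
    refine (Finset.card_le_card fun w hw ↦ ?_).trans
      (Finset.card_image_le (f := fun i ↦ p.getVert (i + 1)))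
    have hw : G.Adj u w := by simpa using hw
    obtain ⟨j, rfl, hj⟩ := Walk.mem_support_iff_exists_getVert.mp (hu w hw)
    have hj0 : j ≠ 0 := by
      rintro rfl
      simp at hw
    obtain ⟨i, rfl⟩ := Nat.exists_eq_succ_of_ne_zero hj0
    refine Finset.mem_image.mpr ⟨i, ?_, rfl⟩
    simp only [S, Finset.mem_filter, Finset.mem_range]
    exact ⟨hj, hw⟩
  have hT : G.minDegree ≤ T.card := by
    refine (G.minDegree_le_degree v).trans ?_
    rw [← G.card_neighborFinset_eq_degree]
    refine (Finset.card_le_card fun w hw ↦ ?_).trans (Finset.card_image_le (f := p.getVert))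
    have hw : G.Adj v w := by simpa using hw
    obtain ⟨j, rfl, hj⟩ := Walk.mem_support_iff_exists_getVert.mp (hv w hw)
    have hjk : j ≠ p.length := by
      rintro rfl
      simp at hw
    refine Finset.mem_image.mpr ⟨j, ?_, rfl⟩
    simp only [T, Finset.mem_filter, Finset.mem_range]
    exact ⟨by omega, hw⟩
  have hSk : S.card ≤ p.length := by simpa using Finset.card_filter_le (Finset.range p.length) _
  have hlt := hp.length_lt
  obtain ⟨i, hiS, hiT⟩ : ∃ i, i ∈ S ∧ i ∈ T := by
    by_contra! h
    have hd : Disjoint S T := Finset.disjoint_left.mpr h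
    have hST : (S ∪ T).card ≤ (Finset.range p.length).card :=
      Finset.card_le_card
        (Finset.union_subset (Finset.filter_subset _ _) (Finset.filter_subset _ _))
    rw [Finset.card_union_of_disjoint hd, Finset.card_range] at hST
    omega
  simp only [S, T, Finset.mem_filter, Finset.mem_range] at hiS hiT
  obtain ⟨c, hc, hlen⟩ :=
    DiracAux.exists_cycle_of_crossing hp (by omega) hiS.1 hiS.2 hiT.2
  refine ⟨u, c, Walk.isHamiltonianCycle_iff_isCycle_and_length_eq.mpr ⟨hc, ?_⟩⟩
  by_contra hne
  let C := c.support.toFinset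
  have hC : p.length + 1 ≤ C.card := by
    have h : c.support.tail.toFinset ⊆ C := fun x hx ↦
      List.mem_toFinset.mpr (List.mem_of_mem_tail (List.mem_toFinset.mp hx))
    have h' := Finset.card_le_card h
    rw [List.toFinset_card_of_nodup hc.support_nodup] at h'
    simpa [hlen] using h'
  have hC' : C.card ≤ p.length + 1 := by
    have h : C ⊆ c.support.tail.toFinset := fun x hx ↦ by
      have hx : x ∈ c.support := List.mem_toFinset.mp hx
      rw [List.mem_toFinset]
      rcases (Walk.mem_support_iff c).mp hx with rfl | h
      · exact Walk.end_mem_tail_support hc.not_nil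
      · exact h
    refine (Finset.card_le_card h).trans ((List.toFinset_card_le _).trans ?_)
    simp [hlen]
  obtain ⟨w, hw⟩ : ∃ w, w ∉ C := by
    by_contra! h
    have := Finset.card_univ (α := V) ▸ congrArg Finset.card (Finset.eq_univ_of_forall h)
    omega
  -- Fewer than `n / 2` vertices lie off the cycle, too few to contain all neighbours of `w`.
  obtain ⟨x, hxC, hwx⟩ : ∃ x ∈ C, G.Adj w x := by
    by_contra! h
    have hsub : G.neighborFinset w ⊆ Cᶜ := fun x hx ↦
      Finset.mem_compl.mpr fun hxC ↦ h x hxC (by simpa using hx)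
    have hle := Finset.card_le_card hsub
    rw [G.card_neighborFinset_eq_degree, Finset.card_compl] at hle
    have := G.minDegree_le_degree w
    omega
  obtain ⟨y, q, hq, hql⟩ := DiracAux.exists_longer_path hc (List.mem_toFinset.mp hxC)
    (fun h ↦ hw (List.mem_toFinset.mpr h)) hwx
  have := hmax _ _ q hq
  omega
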